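/- Let A, B ∈ ℂ[x,y] be homogeneous of degree 4 without common factor, and suppose D = (∂A/∂x)(∂B/∂y) − (∂A/∂y)(∂B/∂x) = c·ℓ₁ℓ₂ℓ₃²ℓ₄² for some c ∈ ℂ∖{0} and pairwise non-proportional linear forms ℓ₁, ℓ₂, ℓ₃, ℓ₄ each dividing C = xA + yB (i.e. the homogeneous foliation defined by ω = A dx + B dy is convex of type 2·R₁+2·R₂). Then ω is linearly conjugate to ω₄ = y³(4x+y)dx + x³(x+4y)dy. -/

import Mathlib

open MvPolynomial

noncomputable section

/-- Polynomials in two variables `x = X 0`, `y = X 1` over `ℂ`. -/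
abbrev P2 : Type := MvPolynomial (Fin 2) ℂ

/-- The inflection polynomial `D_ω = A_x B_y - A_y B_x` of `ω = A dx + B dy`. -/
def Dpoly (A B : P2) : P2 :=
  pderiv 0 A * pderiv 1 B - pderiv 1 A * pderiv 0 B

/-- The tangent cone `C_ω = xA + yB` of `ω = A dx + B dy`. -/
def Cpoly (A B : P2) : P2 := X 0 * A + X 1 * B

/-- `A` and `B` have no common (non-unit) factor. -/
def NoCommonFactor (A B : P2) : Prop := ∀ p : P2, p ∣ A → p ∣ B → IsUnit p

/-- Convexity: every linear factor of `D_ω` divides `C_ω`. -/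
def IsConvexPair (A B : P2) : Prop :=
  ∀ l : P2, l.IsHomogeneous 1 → l ≠ 0 → l ∣ Dpoly A B → l ∣ Cpoly A B

/-- Composition of a polynomial with the linear map `φ(x,y) = (a₁x + a₂y, a₃x + a₄y)`. -/
def comp2 (a₁ a₂ a₃ a₄ : ℂ) (p : P2) : P2 :=
  aeval ![C a₁ * X 0 + C a₂ * X 1, C a₃ * X 0 + C a₄ * X 1] p

/-- `ω = A dx + B dy` is linearly conjugate to `ω' = A' dx + B' dy`:
`φ*ω = λ ω'` for some `φ ∈ GL₂(ℂ)` and `λ ∈ ℂ \ {0}`. -/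
def LinConj (A B A' B' : P2) : Prop :=
  ∃ a₁ a₂ a₃ a₄ lam : ℂ, a₁ * a₄ - a₂ * a₃ ≠ 0 ∧ lam ≠ 0 ∧
    C a₁ * comp2 a₁ a₂ a₃ a₄ A + C a₃ * comp2 a₁ a₂ a₃ a₄ B = C lam * A' ∧
    C a₂ * comp2 a₁ a₂ a₃ a₄ A + C a₄ * comp2 a₁ a₂ a₃ a₄ B = C lam * B'

/-- ω₁ = y⁴dx − x⁴dy -/
def A1 : P2 := X 1 ^ 4
def B1 : P2 := -X 0 ^ 4
/-- ω₂ = y³(2x−y)dx + x³(x−2y)dy -/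
def A2 : P2 := X 1 ^ 3 * (2 * X 0 - X 1)
def B2 : P2 := X 0 ^ 3 * (X 0 - 2 * X 1)
/-- ω₃ = y²(6x²+4xy+y²)dx − x³(x+4y)dy -/
def A3 : P2 := X 1 ^ 2 * (6 * X 0 ^ 2 + 4 * X 0 * X 1 + X 1 ^ 2)
def B3 : P2 := -(X 0 ^ 3 * (X 0 + 4 * X 1))
/-- ω₄ = y³(4x+y)dx + x³(x+4y)dy -/
def A4 : P2 := X 1 ^ 3 * (4 * X 0 + X 1)
def B4 : P2 := X 0 ^ 3 * (X 0 + 4 * X 1)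
/-- ω₅ = y²(6x²+4xy+y²)dx + 3x⁴dy -/
def A5 : P2 := X 1 ^ 2 * (6 * X 0 ^ 2 + 4 * X 0 * X 1 + X 1 ^ 2)
def B5 : P2 := 3 * X 0 ^ 4


/-- Two polynomials are proportional (one is a constant multiple of the other). -/
def Proportional (l₁ l₂ : P2) : Prop := ∃ t : ℂ, l₁ = C t * l₂ ∨ l₂ = C t * l₁

lemma comp2_comp2 (a₁ a₂ a₃ a₄ b₁ b₂ b₃ b₄ : ℂ) (p : P2) :
    comp2 a₁ a₂ a₃ a₄ (comp2 b₁ b₂ b₃ b₄ p) =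
      comp2 (b₁ * a₁ + b₂ * a₃) (b₁ * a₂ + b₂ * a₄) (b₃ * a₁ + b₄ * a₃) (b₃ * a₂ + b₄ * a₄) p := by
  induction p using MvPolynomial.induction_on with
  | C a => simp [comp2]
  | add p q hp hq => simp only [comp2, map_add] at *; rw [hp, hq]
  | mul_X p i hp =>
    simp only [comp2, map_mul] at *
    rw [hp]
    refine congrArg₂ _ rfl ?_
    fin_cases i <;> simp [algebraMap_eq, -aeval_eq_bind₁] <;> ring

lemma comp2_one (p : P2) : comp2 1 0 0 1 p = p := by
  induction p using MvPolynomial.induction_on with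
  | C a => simp [comp2, algebraMap_eq]
  | add p q hp hq => simp only [comp2, map_add] at *; rw [hp, hq]
  | mul_X p i hp =>
    simp only [comp2, map_mul] at *
    rw [hp]
    congr 1
    fin_cases i <;> simp

lemma comp2_add (a₁ a₂ a₃ a₄ : ℂ) (p q : P2) :
    comp2 a₁ a₂ a₃ a₄ (p + q) = comp2 a₁ a₂ a₃ a₄ p + comp2 a₁ a₂ a₃ a₄ q := by simp [comp2]

lemma comp2_sub (a₁ a₂ a₃ a₄ : ℂ) (p q : P2) :
    comp2 a₁ a₂ a₃ a₄ (p - q) = comp2 a₁ a₂ a₃ a₄ p - comp2 a₁ a₂ a₃ a₄ q := by simp [comp2]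

lemma comp2_mul (a₁ a₂ a₃ a₄ : ℂ) (p q : P2) :
    comp2 a₁ a₂ a₃ a₄ (p * q) = comp2 a₁ a₂ a₃ a₄ p * comp2 a₁ a₂ a₃ a₄ q := by simp [comp2]

lemma comp2_pow (a₁ a₂ a₃ a₄ : ℂ) (p : P2) (n : ℕ) :
    comp2 a₁ a₂ a₃ a₄ (p ^ n) = comp2 a₁ a₂ a₃ a₄ p ^ n := by simp [comp2]

lemma comp2_C (a₁ a₂ a₃ a₄ : ℂ) (t : ℂ) :
    comp2 a₁ a₂ a₃ a₄ (C t) = C t := by simp [comp2, algebraMap_eq]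

lemma comp2_zero (a₁ a₂ a₃ a₄ : ℂ) : comp2 a₁ a₂ a₃ a₄ 0 = 0 := by simp [comp2]

lemma comp2_four (a₁ a₂ a₃ a₄ : ℂ) : comp2 a₁ a₂ a₃ a₄ 4 = 4 := comp2_C a₁ a₂ a₃ a₄ 4

lemma comp2_X0 (a₁ a₂ a₃ a₄ : ℂ) :
    comp2 a₁ a₂ a₃ a₄ (X 0) = C a₁ * X 0 + C a₂ * X 1 := by simp [comp2]

lemma comp2_X1 (a₁ a₂ a₃ a₄ : ℂ) :
    comp2 a₁ a₂ a₃ a₄ (X 1) = C a₃ * X 0 + C a₄ * X 1 := by simp [comp2]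

lemma comp2_dvd (a₁ a₂ a₃ a₄ : ℂ) {p q : P2} (h : p ∣ q) :
    comp2 a₁ a₂ a₃ a₄ p ∣ comp2 a₁ a₂ a₃ a₄ q := by
  obtain ⟨r, rfl⟩ := h
  exact ⟨_, comp2_mul _ _ _ _ _ _⟩

lemma pderiv0_comp2 (a₁ a₂ a₃ a₄ : ℂ) (p : P2) :
    pderiv 0 (comp2 a₁ a₂ a₃ a₄ p) =
      C a₁ * comp2 a₁ a₂ a₃ a₄ (pderiv 0 p) + C a₃ * comp2 a₁ a₂ a₃ a₄ (pderiv 1 p) := by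
  induction p using MvPolynomial.induction_on with
  | C a => simp [comp2, algebraMap_eq]
  | add p q hp hq => simp only [comp2_add, map_add, hp, hq]; ring
  | mul_X p i hp =>
    fin_cases i <;>
    simp [comp2_mul, hp, comp2_X0, comp2_X1, pderiv_mul, pderiv_X, comp2_add, Pi.single_apply] <;>
    simp [comp2] <;> ring

lemma pderiv1_comp2 (a₁ a₂ a₃ a₄ : ℂ) (p : P2) :
    pderiv 1 (comp2 a₁ a₂ a₃ a₄ p) =
      C a₂ * comp2 a₁ a₂ a₃ a₄ (pderiv 0 p) + C a₄ * comp2 a₁ a₂ a₃ a₄ (pderiv 1 p) := by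
  induction p using MvPolynomial.induction_on with
  | C a => simp [comp2, algebraMap_eq]
  | add p q hp hq => simp only [comp2_add, map_add, hp, hq]; ring
  | mul_X p i hp =>
    fin_cases i <;>
    simp [comp2_mul, hp, comp2_X0, comp2_X1, pderiv_mul, pderiv_X, comp2_add, Pi.single_apply] <;>
    simp [comp2] <;> ring

lemma Dpoly_pull (a₁ a₂ a₃ a₄ : ℂ) (A B : P2) :
    Dpoly (C a₁ * comp2 a₁ a₂ a₃ a₄ A + C a₃ * comp2 a₁ a₂ a₃ a₄ B)
      (C a₂ * comp2 a₁ a₂ a₃ a₄ A + C a₄ * comp2 a₁ a₂ a₃ a₄ B) =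
      C ((a₁ * a₄ - a₂ * a₃) ^ 2) * comp2 a₁ a₂ a₃ a₄ (Dpoly A B) := by
  simp only [Dpoly, map_add, pderiv_C_mul, pderiv0_comp2, pderiv1_comp2, comp2_sub, comp2_mul,
    map_pow, map_sub, map_mul, smul_eq_C_mul]
  ring

lemma Cpoly_pull (a₁ a₂ a₃ a₄ : ℂ) (A B : P2) :
    Cpoly (C a₁ * comp2 a₁ a₂ a₃ a₄ A + C a₃ * comp2 a₁ a₂ a₃ a₄ B)
      (C a₂ * comp2 a₁ a₂ a₃ a₄ A + C a₄ * comp2 a₁ a₂ a₃ a₄ B) =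
      comp2 a₁ a₂ a₃ a₄ (Cpoly A B) := by
  simp only [Cpoly, comp2_add, comp2_mul, comp2_X0, comp2_X1]
  ring

lemma homog_form {A : P2} {n : ℕ} (h : A.IsHomogeneous n) : ∃ f : ℕ → ℂ,
    A = ∑ i ∈ Finset.range (n + 1), C (f i) * X 0 ^ (n - i) * X 1 ^ i := by
  rw [A.as_sum]
  apply Finset.sum_induction _
    (fun p : P2 => ∃ f : ℕ → ℂ, p = ∑ i ∈ Finset.range (n + 1), C (f i) * X 0 ^ (n - i) * X 1 ^ i)
  · rintro _ _ ⟨f, rfl⟩ ⟨g, rfl⟩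
    refine ⟨f + g, ?_⟩
    rw [← Finset.sum_add_distrib]
    refine Finset.sum_congr rfl fun i _ => ?_
    simp only [Pi.add_apply, map_add]
    ring
  · exact ⟨0, by simp⟩
  · intro d hd
    have hdeg : d 0 + d 1 = n := by
      have := h.degree_eq_sum_deg_support hd
      rw [this, ← Fin.sum_univ_two (fun i => d i)]
      symm
      apply Finset.sum_subset (Finset.subset_univ _)
      intro x _ hx
      simpa using hx
    refine ⟨Pi.single (d 1) (coeff d A), ?_⟩
    rw [Finset.sum_eq_single (d 1)]
    · rw [monomial_eq, Finsupp.prod_fintype _ _ (by simp)]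
      simp only [Fin.prod_univ_two, Pi.single_eq_same]
      rw [show n - d 1 = d 0 by omega]
      ring
    · intro b _ hb
      simp [Pi.single_eq_of_ne hb]
    · intro hb
      exfalso
      apply hb
      simp
      omega

lemma lin_form {l : P2} (h : l.IsHomogeneous 1) : ∃ p q : ℂ, l = C p * X 0 + C q * X 1 := by
  obtain ⟨f, rfl⟩ := homog_form h
  exact ⟨f 0, f 1, by simp [Finset.sum_range_succ]⟩

lemma quartic_form {A : P2} (h : A.IsHomogeneous 4) : ∃ a₀ a₁ a₂ a₃ a₄ : ℂ,
    A = C a₀ * X 0 ^ 4 + C a₁ * X 0 ^ 3 * X 1 + C a₂ * X 0 ^ 2 * X 1 ^ 2 + C a₃ * X 0 * X 1 ^ 3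
      + C a₄ * X 1 ^ 4 := by
  obtain ⟨f, rfl⟩ := homog_form h
  exact ⟨f 0, f 1, f 2, f 3, f 4, by simp [Finset.sum_range_succ]⟩

lemma comp2_homog (a₁ a₂ a₃ a₄ : ℂ) {p : P2} {n : ℕ} (h : p.IsHomogeneous n) :
    (comp2 a₁ a₂ a₃ a₄ p).IsHomogeneous n := by
  have := h.aeval (![C a₁ * X 0 + C a₂ * X 1, C a₃ * X 0 + C a₄ * X 1] : Fin 2 → P2) (n := 1) (by
    intro i
    fin_cases i <;> simp <;>
    exact ((isHomogeneous_C_mul_X _ _).add (isHomogeneous_C_mul_X _ _)))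
  simpa [comp2] using this

lemma LinConj_trans {A B a₁ a₂ a₃ a₄ A'' B''} (hd : a₁ * a₄ - a₂ * a₃ ≠ 0)
    (h : LinConj (C a₁ * comp2 a₁ a₂ a₃ a₄ A + C a₃ * comp2 a₁ a₂ a₃ a₄ B)
      (C a₂ * comp2 a₁ a₂ a₃ a₄ A + C a₄ * comp2 a₁ a₂ a₃ a₄ B) A'' B'') : LinConj A B A'' B'' := by
  obtain ⟨b₁, b₂, b₃, b₄, lam, hb, hl, e1, e2⟩ := h
  refine ⟨a₁ * b₁ + a₂ * b₃, a₁ * b₂ + a₂ * b₄, a₃ * b₁ + a₄ * b₃, a₃ * b₂ + a₄ * b₄, lam, ?_, hl,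
    ?_, ?_⟩
  · have := mul_ne_zero hd hb
    intro h0; apply this; linear_combination h0
  · rw [← e1]; simp only [comp2_add, comp2_mul, comp2_C, comp2_comp2, map_add, map_mul]; ring
  · rw [← e2]; simp only [comp2_add, comp2_mul, comp2_C, comp2_comp2, map_add, map_mul]; ring

lemma poly6 (c0 c1 c2 c3 c4 c5 c6 : ℂ)
    (h : ∀ z : ℂ, c0 + c1 * z + c2 * z ^ 2 + c3 * z ^ 3 + c4 * z ^ 4 + c5 * z ^ 5 + c6 * z ^ 6 = 0) :
    c0 = 0 ∧ c1 = 0 ∧ c2 = 0 ∧ c3 = 0 ∧ c4 = 0 ∧ c5 = 0 ∧ c6 = 0 := by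
  have key : (Polynomial.C c0 + Polynomial.C c1 * Polynomial.X + Polynomial.C c2 * Polynomial.X ^ 2
    + Polynomial.C c3 * Polynomial.X ^ 3 + Polynomial.C c4 * Polynomial.X ^ 4
    + Polynomial.C c5 * Polynomial.X ^ 5 + Polynomial.C c6 * Polynomial.X ^ 6 : Polynomial ℂ) = 0 := by
    apply Polynomial.funext
    intro z
    simpa using h z
  have k (n : ℕ) := congrArg (fun p => Polynomial.coeff p n) key
  have k0 := k 0
  have k1 := k 1
  have k2 := k 2
  have k3 := k 3
  have k4 := k 4
  have k5 := k 5
  have k6 := k 6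
  simp [Polynomial.coeff_X, Polynomial.coeff_C, Polynomial.coeff_X_pow] at k0 k1 k2 k3 k4 k5 k6
  exact ⟨k0, k1, k2, k3, k4, k5, k6⟩

/-- The algebraic heart: the coefficients are determined up to scaling. -/
lemma alg_core (b0 b1 a3 a4 c p1 q1 p2 q2 : ℂ) (hb0 : b0 ≠ 0) (ha4 : a4 ≠ 0)
    (hp1 : p1 ≠ 0) (hp2 : p2 ≠ 0) (hq1 : q1 ≠ 0) (hq2 : q2 ≠ 0)
    (hne : p1 * q2 - p2 * q1 ≠ 0)
    (e1 : c * (p1 * p2) = -12 * a3 * b0)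
    (e2 : c * (p1 * q2 + p2 * q1) = -8 * a3 * b1 - 16 * a4 * b0)
    (e3 : c * (q1 * q2) = -12 * a4 * b1)
    (f1 : a3 * q1 * p1 ^ 2 - a4 * p1 ^ 3 + b0 * q1 ^ 3 - b1 * q1 ^ 2 * p1 = 0)
    (f2 : a3 * q2 * p2 ^ 2 - a4 * p2 ^ 3 + b0 * q2 ^ 3 - b1 * q2 ^ 2 * p2 = 0) :
    ∃ w : ℂ, w ≠ 0 ∧ b1 = 4 * w * b0 ∧ a3 = 4 * w ^ 2 * b0 ∧ a4 = w ^ 3 * b0 := by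
  obtain ⟨z1, rfl⟩ : ∃ z1, q1 = z1 * p1 := ⟨q1 / p1, by field_simp⟩
  obtain ⟨z2, rfl⟩ : ∃ z2, q2 = z2 * p2 := ⟨q2 / p2, by field_simp⟩
  have hz : z1 - z2 ≠ 0 := by
    intro h; apply hne; linear_combination (-p1 * p2) * h
  have hz1 : z1 ≠ 0 := left_ne_zero_of_mul hq1
  have hz2 : z2 ≠ 0 := left_ne_zero_of_mul hq2
  have g1 : a3 * z1 - a4 + b0 * z1 ^ 3 - b1 * z1 ^ 2 = 0 := by
    apply (mul_eq_zero.1 (_ : p1 ^ 3 * _ = 0)).resolve_left (pow_ne_zero 3 hp1)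
    linear_combination f1
  have g2 : a3 * z2 - a4 + b0 * z2 ^ 3 - b1 * z2 ^ 2 = 0 := by
    apply (mul_eq_zero.1 (_ : p2 ^ 3 * _ = 0)).resolve_left (pow_ne_zero 3 hp2)
    linear_combination f2
  obtain ⟨w, hw⟩ : ∃ w, b1 = b0 * (z1 + z2 + w) := ⟨b1 / b0 - z1 - z2, by field_simp; ring⟩
  have ha3 : a3 = b0 * (z1 * z2 + (z1 + z2) * w) := by
    apply sub_eq_zero.1
    apply (mul_eq_zero.1 (_ : (z1 - z2) * _ = 0)).resolve_left hz
    subst hw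
    linear_combination g1 - g2
  have ha4' : a4 = b0 * (z1 * z2 * w) := by
    subst hw ha3
    linear_combination -g1
  subst hw ha3 ha4'
  have hw0 : w ≠ 0 := by rintro rfl; simp at ha4
  have m1 : z1 * z2 = w ^ 2 := by
    apply sub_eq_zero.1
    apply (mul_eq_zero.1 (_ : (12 * b0 ^ 2 * (z1 * z2)) * _ = 0)).resolve_left (by simp [*])
    linear_combination (z1 * z2) * e1 - e3
  have m2 : (z1 + z2 - 3 * w) * (z1 + z2 + 2 * w) = 0 := by
    apply (mul_eq_zero.1 (_ : (4 * b0 ^ 2 * w) * _ = 0)).resolve_left (by simp [*])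
    have : 12 * b0 * (b0 * (z1 * z2 + (z1 + z2) * w)) * (z1 + z2) =
      8 * (b0 * (z1 * z2 + (z1 + z2) * w)) * (b0 * (z1 + z2 + w)) + 16 * (b0 * (z1 * z2 * w)) * b0 := by
      linear_combination (z1 + z2) * e1 - e2
    rw [m1] at this
    linear_combination this
  have m3 : z1 + z2 + 2 * w ≠ 0 := by
    intro h
    apply hz
    have : (z1 - z2) ^ 2 = 0 := by linear_combination (z1 + z2 - 2 * w) * h - 4 * m1
    exact pow_eq_zero_iff (two_ne_zero) |>.1 this
  have m4 := (mul_eq_zero.1 m2).resolve_right m3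
  refine ⟨w, hw0, ?_, ?_, ?_⟩
  · linear_combination b0 * m4
  · linear_combination b0 * m1 + b0 * w * m4
  · linear_combination b0 * w * m1

lemma core (A B : P2) (hA : A.IsHomogeneous 4) (hB : B.IsHomogeneous 4)
    (h0 : ¬ (X 0 ∣ A ∧ X 0 ∣ B)) (h1 : ¬ (X 1 ∣ A ∧ X 1 ∣ B))
    (c p1 q1 p2 q2 : ℂ) (hc : c ≠ 0)
    (hp1 : p1 ≠ 0) (hp2 : p2 ≠ 0) (hq1 : q1 ≠ 0) (hq2 : q2 ≠ 0)
    (hne : p1 * q2 - p2 * q1 ≠ 0)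
    (d1 : C p1 * X 0 + C q1 * X 1 ∣ Cpoly A B) (d2 : C p2 * X 0 + C q2 * X 1 ∣ Cpoly A B)
    (d3 : X 0 ∣ Cpoly A B) (d4 : X 1 ∣ Cpoly A B)
    (hD : Dpoly A B = C c * (C p1 * X 0 + C q1 * X 1) * (C p2 * X 0 + C q2 * X 1)
      * X 0 ^ 2 * X 1 ^ 2) : LinConj A B A4 B4 := by
  obtain ⟨a0, a1, a2, a3, a4, rfl⟩ := quartic_form hA
  obtain ⟨b0, b1, b2, b3, b4, rfl⟩ := quartic_form hB
  have E {p q : P2} (h : p ∣ q) (x y : ℂ) (hp : eval ![x, y] p = 0) : eval ![x, y] q = 0 := by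
    obtain ⟨r, rfl⟩ := h
    simp [hp]
  have f1 := E d1 q1 (-p1) (by simp; ring)
  have f2 := E d2 q2 (-p2) (by simp; ring)
  have f3 := E d3 0 1 (by simp)
  have f4 := E d4 1 0 (by simp)
  simp [Cpoly] at f1 f2 f3 f4
  subst f3 f4
  have ha4 : a4 ≠ 0 := by
    rintro rfl
    apply h0
    constructor
    · exact ⟨C a1 * X 0 ^ 2 * X 1 + C a2 * X 0 * X 1 ^ 2 + C a3 * X 1 ^ 3, by simp; ring⟩
    · exact ⟨C b0 * X 0 ^ 3 + C b1 * X 0 ^ 2 * X 1 + C b2 * X 0 * X 1 ^ 2 + C b3 * X 1 ^ 3,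
        by simp; ring⟩
  have hb0 : b0 ≠ 0 := by
    rintro rfl
    apply h1
    constructor
    · exact ⟨C a1 * X 0 ^ 3 + C a2 * X 0 ^ 2 * X 1 + C a3 * X 0 * X 1 ^ 2 + C a4 * X 1 ^ 3,
        by simp; ring⟩
    · exact ⟨C b1 * X 0 ^ 3 + C b2 * X 0 ^ 2 * X 1 + C b3 * X 0 * X 1 ^ 2, by simp; ring⟩
  have hDe (z : ℂ) := congrArg (eval ![z, 1]) hD
  simp [Dpoly, pderiv_mul, pderiv_X, Pi.single_apply, pderiv_pow] at hDe
  obtain ⟨k0, k1, k2, k3, k4, k5, k6⟩ := poly6 (-4 * a4 * b3) (-8 * a4 * b2)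
    (4 * a2 * b3 - 4 * a3 * b2 - 12 * a4 * b1 - c * (q1 * q2))
    (8 * a1 * b3 - 8 * a3 * b1 - 16 * a4 * b0 - c * (p1 * q2 + p2 * q1))
    (4 * a1 * b2 - 4 * a2 * b1 - 12 * a3 * b0 - c * (p1 * p2))
    (-8 * a2 * b0) (-4 * a1 * b0) (by
      intro z
      linear_combination hDe z)
  have z3 : b3 = 0 := by simpa [ha4] using k0
  have z2 : b2 = 0 := by simpa [ha4] using k1
  have y2 : a2 = 0 := by simpa [hb0] using k5
  have y1 : a1 = 0 := by simpa [hb0] using k6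
  subst z3 z2 y2 y1
  obtain ⟨w, hw, r1, r2, r3⟩ := alg_core b0 b1 a3 a4 c p1 q1 p2 q2 hb0 ha4 hp1 hp2 hq1 hq2 hne
    (by linear_combination -k4) (by linear_combination -k3) (by linear_combination -k2)
    (by
      apply (mul_eq_zero.1 (_ : (-p1 * q1) * _ = 0)).resolve_left (by simp [*])
      linear_combination f1)
    (by
      apply (mul_eq_zero.1 (_ : (-p2 * q2) * _ = 0)).resolve_left (by simp [*])
      linear_combination f2)
  subst r1 r2 r3
  refine ⟨1, 0, 0, 1 / w, b0 / w, by simpa using hw, by simp [hb0, hw], ?_, ?_⟩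
  · have hww : (C w : P2) * C (1 / w) = 1 := by
      rw [← C_mul, mul_one_div_cancel hw, C_1]
    simp only [comp2_add, comp2_mul, comp2_C, comp2_X0, comp2_X1, comp2_pow, A4, div_eq_mul_one_div b0 w,
      C_mul, C_pow, C_0, C_1, show (C (4 : ℂ) : P2) = 4 from rfl,
      comp2_zero, comp2_four]
    generalize (C (1 / w) : P2) = v at *
    linear_combination (C b0 * X 1 ^ 3 * (4 * X 0 * v * (C w * v + 1)
      + v * X 1 * ((C w * v) ^ 2 + C w * v + 1))) * hww
  · have hww : (C w : P2) * C (1 / w) = 1 := by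
      rw [← C_mul, mul_one_div_cancel hw, C_1]
    simp only [comp2_add, comp2_mul, comp2_C, comp2_X0, comp2_X1, comp2_pow, B4, div_eq_mul_one_div b0 w,
      C_mul, C_pow, C_0, C_1, show (C (4 : ℂ) : P2) = 4 from rfl,
      comp2_zero, comp2_four]
    generalize (C (1 / w) : P2) = v at *
    linear_combination (C b0 * X 0 ^ 3 * v * 4 * X 1) * hww

lemma det_ne {p1 q1 p2 q2 : ℂ} (hn : C p1 * X 0 + C q1 * X 1 ≠ (0 : P2))
    (h : ¬ Proportional (C p1 * X 0 + C q1 * X 1) (C p2 * X 0 + C q2 * X 1)) :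
    p1 * q2 - p2 * q1 ≠ 0 := by
  intro h0
  by_cases hp : p1 = 0
  · subst hp
    have hq : q1 ≠ 0 := by rintro rfl; simp at hn
    have hp2 : p2 = 0 := by simpa [hq] using h0
    subst hp2
    refine h ⟨q2 / q1, Or.inr ?_⟩
    simp only [C_0, zero_mul, zero_add]
    rw [← mul_assoc, ← C_mul, div_mul_cancel₀ _ hq]
  · refine h ⟨p2 / p1, Or.inr ?_⟩
    rw [mul_add, ← mul_assoc, ← mul_assoc, ← C_mul, ← C_mul, div_mul_cancel₀ _ hp]
    congr 3
    field_simp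
    linear_combination h0

lemma lin_not_unit {p q : ℂ} : ¬ IsUnit (C p * X 0 + C q * X 1 : P2) := by
  intro h
  have := h.map (eval ![(0 : ℂ), 0])
  simp at this

/-- If the homogeneous foliation `ω = A dx + B dy` of degree 4 is convex of type `2·R₁+2·R₂`,
then `ω` is linearly conjugate to `ω₄ = y³(4x+y)dx + x³(x+4y)dy`. -/
theorem type_two_R1_two_R2_classification
    (A B : P2) (hA : A.IsHomogeneous 4) (hB : B.IsHomogeneous 4)
    (hcop : NoCommonFactor A B)
    (c : ℂ) (hc : c ≠ 0) (l₁ l₂ l₃ l₄ : P2)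
    (h₁ : l₁.IsHomogeneous 1) (h₂ : l₂.IsHomogeneous 1)
    (h₃ : l₃.IsHomogeneous 1) (h₄ : l₄.IsHomogeneous 1)
    (hn₁ : l₁ ≠ 0) (hn₂ : l₂ ≠ 0) (hn₃ : l₃ ≠ 0) (hn₄ : l₄ ≠ 0)
    (hp₁₂ : ¬ Proportional l₁ l₂) (hp₁₃ : ¬ Proportional l₁ l₃)
    (hp₁₄ : ¬ Proportional l₁ l₄) (hp₂₃ : ¬ Proportional l₂ l₃)
    (hp₂₄ : ¬ Proportional l₂ l₄) (hp₃₄ : ¬ Proportional l₃ l₄)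
    (hdvd₁ : l₁ ∣ Cpoly A B) (hdvd₂ : l₂ ∣ Cpoly A B)
    (hdvd₃ : l₃ ∣ Cpoly A B) (hdvd₄ : l₄ ∣ Cpoly A B)
    (hD : Dpoly A B = C c * l₁ * l₂ * l₃ ^ 2 * l₄ ^ 2) :
    LinConj A B A4 B4 := by
  obtain ⟨p1, q1, rfl⟩ := lin_form h₁
  obtain ⟨p2, q2, rfl⟩ := lin_form h₂
  obtain ⟨p3, q3, rfl⟩ := lin_form h₃
  obtain ⟨p4, q4, rfl⟩ := lin_form h₄
  have n12 := det_ne hn₁ hp₁₂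
  have n13 := det_ne hn₁ hp₁₃
  have n14 := det_ne hn₁ hp₁₄
  have n23 := det_ne hn₂ hp₂₃
  have n24 := det_ne hn₂ hp₂₄
  have n34 := det_ne hn₃ hp₃₄
  obtain ⟨e, he⟩ : ∃ e, e * (p3 * q4 - p4 * q3) = 1 := ⟨_, inv_mul_cancel₀ n34⟩
  have he0 : e ≠ 0 := left_ne_zero_of_mul_eq_one he
  have hcl (p q : ℂ) : comp2 (e * q4) (-e * q3) (-e * p4) (e * p3) (C p * X 0 + C q * X 1) =
      C (e * (p * q4 - p4 * q)) * X 0 + C (-e * (p * q3 - p3 * q)) * X 1 := by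
    simp only [comp2_add, comp2_mul, comp2_C, comp2_X0, comp2_X1, C_mul, C_sub, C_neg]
    ring
  have hc3 : comp2 (e * q4) (-e * q3) (-e * p4) (e * p3) (C p3 * X 0 + C q3 * X 1) = X 0 := by
    rw [hcl, he, show -e * (p3 * q3 - p3 * q3) = 0 by ring]; simp
  have hc4 : comp2 (e * q4) (-e * q3) (-e * p4) (e * p3) (C p4 * X 0 + C q4 * X 1) = X 1 := by
    rw [hcl, show -e * (p4 * q3 - p3 * q4) = 1 by linear_combination he,
      show e * (p4 * q4 - p4 * q4) = 0 by ring]; simp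
  have hdet : (e * q4) * (e * p3) - (-e * q3) * (-e * p4) ≠ 0 := by
    rw [show (e * q4) * (e * p3) - (-e * q3) * (-e * p4) = e by linear_combination e * he]
    exact he0
  have hinv (p : P2) : comp2 p3 q3 p4 q4 (comp2 (e * q4) (-e * q3) (-e * p4) (e * p3) p) = p := by
    rw [comp2_comp2]
    convert comp2_one p using 2
    · linear_combination he
    · ring
    · ring
    · linear_combination he
  have hback (l : P2) (hl : ¬ IsUnit (comp2 p3 q3 p4 q4 l)) :
      ¬ (l ∣ C (e * q4) * comp2 (e * q4) (-e * q3) (-e * p4) (e * p3) A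
          + C (-e * p4) * comp2 (e * q4) (-e * q3) (-e * p4) (e * p3) B ∧
        l ∣ C (-e * q3) * comp2 (e * q4) (-e * q3) (-e * p4) (e * p3) A
          + C (e * p3) * comp2 (e * q4) (-e * q3) (-e * p4) (e * p3) B) := by
    rintro ⟨u1, u2⟩
    have v1 := comp2_dvd p3 q3 p4 q4 u1
    have v2 := comp2_dvd p3 q3 p4 q4 u2
    simp only [comp2_add, comp2_mul, comp2_C, hinv] at v1 v2
    have heC : (C e : P2) * (C p3 * C q4 - C p4 * C q3) = 1 := by
      rw [← C_mul, ← C_mul, ← C_sub, ← C_mul, he, C_1]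
    apply hl
    apply hcop
    · convert dvd_add (v1.mul_left (C p3)) (v2.mul_left (C p4)) using 1
      simp only [C_mul, C_neg]
      linear_combination -A * heC
    · convert dvd_add (v1.mul_left (C q3)) (v2.mul_left (C q4)) using 1
      simp only [C_mul, C_neg]
      linear_combination -B * heC
  apply LinConj_trans hdet
  refine core _ _ ?_ ?_ (hback _ ?_) (hback _ ?_) (e ^ 2 * c)
    (e * (p1 * q4 - p4 * q1)) (-e * (p1 * q3 - p3 * q1))
    (e * (p2 * q4 - p4 * q2)) (-e * (p2 * q3 - p3 * q2)) (by simp [he0, hc])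
    (mul_ne_zero he0 n14) (mul_ne_zero he0 n24) (mul_ne_zero (neg_ne_zero.2 he0) n13)
    (mul_ne_zero (neg_ne_zero.2 he0) n23) ?_ ?_ ?_ ?_ ?_ ?_
  · exact ((comp2_homog _ _ _ _ hA).C_mul _).add ((comp2_homog _ _ _ _ hB).C_mul _)
  · exact ((comp2_homog _ _ _ _ hA).C_mul _).add ((comp2_homog _ _ _ _ hB).C_mul _)
  · rw [comp2_X0]; exact lin_not_unit
  · rw [comp2_X1]; exact lin_not_unit
  · intro h0
    apply mul_ne_zero he0 n12
    linear_combination h0 - e * (p1 * q2 - p2 * q1) * he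
  · rw [Cpoly_pull, ← hcl]; exact comp2_dvd _ _ _ _ hdvd₁
  · rw [Cpoly_pull, ← hcl]; exact comp2_dvd _ _ _ _ hdvd₂
  · rw [Cpoly_pull, ← hc3]; exact comp2_dvd _ _ _ _ hdvd₃
  · rw [Cpoly_pull, ← hc4]; exact comp2_dvd _ _ _ _ hdvd₄
  · rw [Dpoly_pull, hD,
      show (e * q4) * (e * p3) - (-e * q3) * (-e * p4) = e by linear_combination e * he]
    simp only [comp2_mul, comp2_pow, comp2_C, hc3, hc4, hcl]
    simp only [C_mul, C_pow]
    ring
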